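/- arXiv:2305.08940 — 2 statements merged into one kernel-verified Lean document; each statement's English description precedes it below -/
import Mathlib

section
/- Let X be a metrizable Souslin space and B a countable family of conditioning events. Then Δ^B(X) is a Souslin space; if moreover X is Lusin, then Δ^B(X) is a Lusin space (even when the elements of B are not clopen). -/
open MeasureTheory Set TopologicalSpace

/-- A conditional probability system on `(X, Σ_X, 𝓑)`: a family of probability measures
`μ(·|B)`, `B ∈ 𝓑`, with `μ(B|B) = 1` and the chain rule
`μ(A|B)·μ(B|C) = μ(A|C)` whenever `A ⊆ B ⊆ C`, `A` measurable, `B, C ∈ 𝓑`. -/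
def IsCPS {X : Type*} [MeasurableSpace X] (𝓑 : Set (Set X)) (μ : 𝓑 → ProbabilityMeasure X) : Prop :=
  (∀ B : 𝓑, (μ B : Measure X) (B : Set X) = 1) ∧
  ∀ (A : Set X) (B C : 𝓑), MeasurableSet A → A ⊆ (B : Set X) → (B : Set X) ⊆ (C : Set X) →
    (μ B : Measure X) A * (μ C : Measure X) (B : Set X) = (μ C : Measure X) A

/-- A Souslin space: continuous image of a Polish (complete separable metrizable) space. -/
def SouslinSpace (α : Type*) [TopologicalSpace α] : Prop :=
  ∃ (β : Type) (t : TopologicalSpace β), @PolishSpace β t ∧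
    ∃ f : β → α, @Continuous β α t _ f ∧ Function.Surjective f

/-- A Lusin space: continuous bijective image of a Polish space. -/
def LusinSpace (α : Type*) [TopologicalSpace α] : Prop :=
  ∃ (β : Type) (t : TopologicalSpace β), @PolishSpace β t ∧
    ∃ f : β → α, @Continuous β α t _ f ∧ Function.Bijective f

theorem cps_eval_measurable {E P : Type*} [TopologicalSpace E] [MetrizableSpace E]
    [MeasurableSpace E] [BorelSpace E] [TopologicalSpace P] [MeasurableSpace P]
    [OpensMeasurableSpace P] (h : P → ProbabilityMeasure E) (hc : Continuous h)
    {A : Set E} (hA : MeasurableSet A) :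
    Measurable (fun p => (h p : Measure E) A) := by
  let _ := metrizableSpaceMetric E
  have hcl : ∀ F : Set E, IsClosed F → Measurable (fun p => (h p : Measure E) F) := by
    intro F hF
    refine measurable_of_tendsto_metrizable
      (f := fun n p => ∫⁻ x, hF.apprSeq n x ∂(h p : Measure E)) (fun n => ?_) ?_
    · have := (ProbabilityMeasure.continuous_lintegral_boundedContinuousFunction
        (hF.apprSeq n)).comp hc
      exact this.measurable
    · rw [tendsto_pi_nhds]
      intro p
      exact HasOuterApproxClosed.tendsto_lintegral_apprSeq hF (h p : Measure E)
  induction A, hA using MeasurableSpace.induction_on_inter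
    (borel_eq_generateFrom_isClosed (α := E) ▸ BorelSpace.measurable_eq) isPiSystem_isClosed with
  | empty => simp
  | basic t ht => exact hcl t ht
  | compl t ht ih =>
    simp_rw [prob_compl_eq_one_sub ht]
    exact measurable_const.sub ih
  | iUnion f hd hm ih =>
    simp_rw [measure_iUnion hd hm]
    exact Measurable.tsum ih

theorem cps_analytic_nullMeasurable {X : Type*} [TopologicalSpace X] [MetrizableSpace X]
    [MeasurableSpace X] [BorelSpace X] (μ : Measure X) [IsFiniteMeasure μ]
    (f : (ℕ → ℕ) → X) (hf : Continuous f) : NullMeasurableSet (range f) μ := by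
  let _ := metrizableSpaceMetric X
  have key : ∀ ε > (0 : ENNReal), ∃ K ⊆ range f, MeasurableSet K ∧ μ (range f) ≤ μ K + ε := by
    intro ε hε
    rcases le_or_gt (μ (range f)) ε with hle | hlt
    · exact ⟨∅, empty_subset _, MeasurableSet.empty, by simpa using hle⟩
    set c := μ (range f) - ε with hc
    have hfin : μ (range f) ≠ ⊤ := measure_ne_top _ _
    have hc0 : c < μ (range f) := ENNReal.sub_lt_self hfin (ne_bot_of_gt hlt) hε.ne'
    let C : (ℕ → ℕ) → ℕ → Set (ℕ → ℕ) := fun a k => {x | ∀ i < k, x i ≤ a i}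
    -- the recursive step
    have step : ∀ (k : ℕ) (D : Set (ℕ → ℕ)), c < μ (f '' D) →
        ∃ m, c < μ (f '' {x ∈ D | x k ≤ m}) := by
      intro k D hD
      have hU : f '' D = ⋃ m, f '' {x ∈ D | x k ≤ m} := by
        rw [← image_iUnion]
        congr 1
        ext x
        simp only [mem_iUnion, mem_ofPred_eq, exists_and_left]
        exact ⟨fun hx => ⟨hx, x k, le_rfl⟩, fun hx => hx.1⟩
      have hmono : Monotone (fun m => f '' {x ∈ D | x k ≤ m}) := by
        intro m n hmn
        exact image_mono (fun x hx => ⟨hx.1, hx.2.trans hmn⟩)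
      rw [hU, hmono.measure_iUnion] at hD
      exact lt_iSup_iff.1 hD
    choose! g hg using step
    let T : ℕ → Set (ℕ → ℕ) := fun n => Nat.rec univ (fun k D => {x ∈ D | x k ≤ g k D}) n
    have hTs : ∀ k, T (k+1) = {x ∈ T k | x k ≤ g k (T k)} := fun k => rfl
    have hT : ∀ k, c < μ (f '' T k) := by
      intro k
      induction k with
      | zero => simpa [T, image_univ] using hc0
      | succ k ih => rw [hTs]; exact hg k _ ih
    let a : ℕ → ℕ := fun k => g k (T k)
    have hTC : ∀ k, T k = C a k := by
      intro k
      induction k with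
      | zero => simp [T, C]
      | succ k ih =>
        rw [hTs, ih]
        ext x
        simp only [C, mem_ofPred_eq, Nat.lt_succ_iff_lt_or_eq]
        constructor
        · rintro ⟨h1, h2⟩ i (hi | rfl)
          · exact h1 i hi
          · simpa [a, ih, C] using h2
        · intro h1
          exact ⟨fun i hi => h1 i (Or.inl hi), by simpa [a, ih, C] using h1 k (Or.inr rfl)⟩
    let K : Set (ℕ → ℕ) := {x | ∀ i, x i ≤ a i}
    have hK : IsCompact K := by
      have : K = Set.pi univ (fun i => Iic (a i)) := by ext x; simp [K, Pi.le_def]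
      rw [this]
      exact isCompact_univ_pi (fun i => (finite_Iic _).isCompact)
    have hfK : IsCompact (f '' K) := hK.image hf
    refine ⟨f '' K, image_subset_range _ _, hfK.measurableSet, ?_⟩
    suffices h : c ≤ μ (f '' K) by
      rw [hc] at h
      exact tsub_le_iff_right.1 h
    rw [Set.measure_eq_iInf_isOpen]
    refine le_iInf₂ fun U hU => le_iInf fun hUo => ?_
    -- find k with C a k ⊆ f ⁻¹' U
    have hVo : IsOpen (f ⁻¹' U) := hUo.preimage hf
    have hKV : K ⊆ f ⁻¹' U := image_subset_iff.1 hU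
    have : ∃ k, C a k ⊆ f ⁻¹' U := by
      by_contra! hcon
      -- pick bad points and truncate
      simp only [not_subset] at hcon
      choose x hxC hxU using hcon
      let y : ℕ → (ℕ → ℕ) := fun k i => if i < k then x k i else 0
      have hy : ∀ k, y k ∈ K := by
        intro k i
        by_cases hi : i < k
        · simpa [y, hi] using hxC k i hi
        · simp [y, hi]
      obtain ⟨z, hz, φ, hφ, hlim⟩ := hK.tendsto_subseq hy
      have hlim2 : Filter.Tendsto (x ∘ φ) Filter.atTop (nhds z) := by
        rw [tendsto_pi_nhds] at hlim ⊢
        intro i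
        refine (hlim i).congr' ?_
        filter_upwards [Filter.eventually_gt_atTop i] with n hn
        have : i < φ n := hn.trans_le (hφ.id_le n)
        simp [y, this]
      have := hlim2.eventually (hVo.mem_nhds (hKV hz))
      obtain ⟨n, hn⟩ := this.exists
      exact hxU _ hn
    obtain ⟨k, hk⟩ := this
    refine (hT k).le.trans ?_
    rw [hTC]
    exact measure_mono (image_subset_iff.2 hk)
  choose! K hK1 hK2 hK3 using key
  let L : Set X := ⋃ n : ℕ, K ((n : ENNReal) + 1)⁻¹
  have hpos : ∀ n : ℕ, (0:ENNReal) < ((n : ENNReal) + 1)⁻¹ := by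
    intro n; rw [ENNReal.inv_pos]; finiteness
  have hLm : MeasurableSet L := MeasurableSet.iUnion fun n => hK2 _ (hpos n)
  have hLs : L ⊆ range f := iUnion_subset fun n => hK1 _ (hpos n)
  have hle : μ (range f) ≤ μ L := by
    have h1 : ∀ n : ℕ, μ (range f) ≤ μ L + ((n : ENNReal) + 1)⁻¹ := fun n =>
      (hK3 _ (hpos n)).trans (by gcongr; exact subset_iUnion_of_subset n subset_rfl)
    have h2 : Filter.Tendsto (fun n : ℕ => μ L + ((n : ENNReal) + 1)⁻¹) Filter.atTop
        (nhds (μ L + 0)) := by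
      refine Filter.Tendsto.add tendsto_const_nhds ?_
      have := (Filter.tendsto_add_atTop_iff_nat 1).2 ENNReal.tendsto_inv_nat_nhds_zero
      simpa using this
    have := ge_of_tendsto' h2 h1
    simpa using this
  have := ae_eq_of_subset_of_measure_ge hLs hle hLm.nullMeasurableSet (measure_ne_top _ _)
  exact hLm.nullMeasurableSet.congr this

theorem cps_res_closed (n : ℕ) : ∀ l : List ℕ, IsClosed {y : ℕ → ℕ | PiNat.res y n = l} := by
  induction n with
  | zero =>
    intro l
    simp only [PiNat.res_zero]
    exact isClosed_const
  | succ n ih =>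
    intro l
    simp only [PiNat.res_succ]
    cases l with
    | nil => simp
    | cons k l =>
      simp only [List.cons.injEq]
      exact (isClosed_eq (continuous_apply n) continuous_const).inter (ih l)

theorem cps_section {X : Type*} [TopologicalSpace X] [MetrizableSpace X]
    [MeasurableSpace X] [BorelSpace X] (μ : Measure X) [IsFiniteMeasure μ]
    (f : (ℕ → ℕ) → X) (hf : Continuous f) (hsurj : Function.Surjective f) :
    ∃ s : X → (ℕ → ℕ), AEMeasurable s μ ∧ ∀ x, f (s x) = x := by
  classical
  let P : ℕ → List ℕ → Set X := fun n l => f '' {y : ℕ → ℕ | PiNat.res y n = l}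
  have hP : ∀ n l, NullMeasurableSet (P n l) μ := by
    intro n l
    have h1 : AnalyticSet (P n l) := (cps_res_closed n l).analyticSet.image_of_continuous hf
    rw [AnalyticSet] at h1
    rcases h1 with h1 | ⟨g, hg, hgr⟩
    · rw [h1]; exact MeasurableSet.empty.nullMeasurableSet
    · rw [← hgr]; exact cps_analytic_nullMeasurable μ g hg
  let g : ℕ → X → List ℕ := fun n x =>
    Nat.rec [] (fun n l => sInf {k | x ∈ P (n+1) (k :: l)} :: l) n
  have hg0 : ∀ x, g 0 x = [] := fun x => rfl
  have hgs : ∀ n x, g (n+1) x = sInf {k | x ∈ P (n+1) (k :: g n x)} :: g n x := fun n x => rfl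
  have hne : ∀ n x l, x ∈ P n l → ({k | x ∈ P (n+1) (k :: l)}).Nonempty := by
    rintro n x l ⟨y, hy, rfl⟩
    refine ⟨y n, y, ?_, rfl⟩
    change PiNat.res y (n+1) = _
    rw [PiNat.res_succ]
    have : PiNat.res y n = l := hy
    rw [this]
  have hmem : ∀ n x, x ∈ P n (g n x) := by
    intro n x
    induction n with
    | zero =>
      obtain ⟨y, hy⟩ := hsurj x
      exact ⟨y, by simp [hg0], hy⟩
    | succ n ih =>
      rw [hgs]
      exact Nat.sInf_mem (hne n x _ ih)
  have hgm : ∀ n l, NullMeasurableSet {x | g n x = l} μ := by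
    intro n
    induction n with
    | zero =>
      intro l
      simp only [hg0]
      exact NullMeasurableSet.const _
    | succ n ih =>
      intro l
      cases l with
      | nil => simp [hgs]
      | cons k l =>
        have : {x | g (n+1) x = k :: l} = {x | g n x = l} ∩ (P (n+1) (k :: l) ∩
            ⋂ j ∈ Iio k, (P (n+1) (j :: l))ᶜ) := by
          ext x
          simp only [hgs, List.cons.injEq, mem_ofPred_eq, mem_inter_iff, mem_iInter, mem_compl_iff,
            mem_Iio]
          constructor
          · rintro ⟨h1, h2⟩
            subst h2
            refine ⟨rfl, ?_, ?_⟩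
            · have := Nat.sInf_mem (hne n x _ (hmem n x))
              rw [h1] at this
              exact this
            · intro j hj hx
              have : sInf {k | x ∈ P (n+1) (k :: g n x)} ≤ j := Nat.sInf_le hx
              omega
          · rintro ⟨h2, h1, h3⟩
            subst h2
            refine ⟨le_antisymm (Nat.sInf_le h1) ?_, rfl⟩
            by_contra! hlt
            exact h3 _ hlt (Nat.sInf_mem (hne n x _ (hmem n x)))
        rw [this]
        exact (ih l).inter ((hP _ _).inter
          (NullMeasurableSet.biInter (to_countable _) fun j _ => (hP _ _).compl))
  let s : X → ℕ → ℕ := fun x n => sInf {k | x ∈ P (n+1) (k :: g n x)}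
  have hs : ∀ n x, PiNat.res (s x) n = g n x := by
    intro n x
    induction n with
    | zero => simp [hg0]
    | succ n ih => rw [PiNat.res_succ, ih, hgs]
  refine ⟨s, ?_, ?_⟩
  · have h1 : NullMeasurable s μ := by
      have : @Measurable (NullMeasurableSpace X μ) (ℕ → ℕ) _ _ s := by
        refine measurable_pi_iff.2 fun n => ?_
        refine measurable_to_countable' fun k => ?_
        have : (fun x => s x n) ⁻¹' {k} = ⋃ l, {x | g (n+1) x = k :: l} := by
          ext x
          simp [hgs, s]
        change NullMeasurableSet ((fun x : X => s x n) ⁻¹' {k}) μ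
        rw [this]
        exact NullMeasurableSet.iUnion (fun l => hgm (n+1) (k :: l))
      exact fun t ht => this ht
    exact h1.aemeasurable
  · intro x
    choose y hy hyx using fun n => hmem n x
    have hlim : Filter.Tendsto y Filter.atTop (nhds (s x)) := by
      rw [tendsto_pi_nhds]
      intro i
      refine tendsto_const_nhds.congr' ?_
      filter_upwards [Filter.eventually_gt_atTop i] with n hn
      have h1 : PiNat.res (y n) n = PiNat.res (s x) n := (hy n).trans (hs n x).symm
      exact (PiNat.res_eq_res.1 h1 hn).symm
    have h2 := (hf.tendsto _).comp hlim
    have h3 : f ∘ y = fun _ => x := funext hyx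
    rw [h3] at h2
    exact (tendsto_nhds_unique h2 tendsto_const_nhds)

theorem cps_map_surjective {X β : Type*} [TopologicalSpace X] [MetrizableSpace X]
    [MeasurableSpace X] [BorelSpace X] [TopologicalSpace β] [PolishSpace β]
    [MeasurableSpace β] [BorelSpace β] (f : β → X) (hf : Continuous f)
    (hsurj : Function.Surjective f) (μ : ProbabilityMeasure X) :
    ∃ ν : ProbabilityMeasure β, ν.map hf.measurable.aemeasurable = μ := by
  have : Nonempty X := μ.nonempty
  have : Nonempty β := ⟨(hsurj (Classical.arbitrary X)).choose⟩
  obtain ⟨g, hg, hgs⟩ := PolishSpace.exists_nat_nat_continuous_surjective β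
  obtain ⟨s, hs, hfs⟩ := cps_section (μ : Measure X) (f ∘ g) (hf.comp hg) (hsurj.comp hgs)
  have hgs' : AEMeasurable (g ∘ s) (μ : Measure X) := hg.measurable.comp_aemeasurable hs
  refine ⟨μ.map hgs', ?_⟩
  apply Subtype.ext
  change Measure.map f (Measure.map (g ∘ s) (μ : Measure X)) = μ
  rw [AEMeasurable.map_map_of_aemeasurable hf.measurable.aemeasurable hgs']
  have : f ∘ (g ∘ s) = id := funext hfs
  rw [this, Measure.map_id]

theorem cps_hilbert_embedding (β : Type*) [TopologicalSpace β] [PolishSpace β] :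
    ∃ e : β → (ℕ → unitInterval), Topology.IsEmbedding e := by
  let _ := upgradeIsCompletelyMetrizable β
  rcases isEmpty_or_nonempty β with h | h
  · exact ⟨fun x => isEmptyElim x, Topology.IsEmbedding.of_subsingleton _⟩
  let d := denseSeq β
  let e : β → (ℕ → unitInterval) := fun x n =>
    ⟨min (dist x (d n)) 1, le_min dist_nonneg zero_le_one, min_le_right _ _⟩
  have he : Continuous e := by
    refine continuous_pi fun n => Continuous.subtype_mk ?_ _
    fun_prop
  have hind : Topology.IsInducing e := by
    rw [Topology.isInducing_iff_nhds]
    intro x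
    refine le_antisymm ((he.tendsto x).le_comap) ?_
    rw [Metric.nhds_basis_ball.ge_iff]
    intro ε hε
    obtain ⟨n, hn⟩ := (denseRange_denseSeq β).exists_dist_lt x (lt_min (half_pos hε) one_half_pos)
    refine Filter.mem_comap.2 ⟨{z | (z n : ℝ) < min (ε/2) (1/2)}, ?_, ?_⟩
    · refine IsOpen.mem_nhds (isOpen_lt (by fun_prop) continuous_const) ?_
      change min (dist x (d n)) 1 < _
      exact (min_le_left _ _).trans_lt hn
    · intro y hy
      have hy : min (dist y (d n)) 1 < min (ε/2) (1/2) := hy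
      rw [lt_min_iff, min_lt_iff, min_lt_iff] at hy
      have h1 : dist y (d n) < ε / 2 := by
        rcases hy with ⟨h1 | h1, h2 | h2⟩ <;> first | assumption | (exfalso; linarith) | linarith
      have h2 : dist x (d n) < ε / 2 := hn.trans_le (min_le_left _ _)
      rw [Metric.mem_ball]
      calc dist y x ≤ dist y (d n) + dist x (d n) := dist_triangle_right _ _ _
        _ < ε := by linarith
  exact ⟨e, hind.isEmbedding⟩

theorem cps_pi_countable {α : Type*} {S : Set (Set α)} (hS : S.Countable) :
    (generatePiSystem S).Countable := by
  refine ((countable_ofPred_finite_subset hS).image sInter).mono ?_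
  intro t ht
  induction ht with
  | base h => exact ⟨{_}, ⟨finite_singleton _, by simpa using h⟩, sInter_singleton _⟩
  | inter _ _ _ ih1 ih2 =>
    obtain ⟨F, hF, rfl⟩ := ih1
    obtain ⟨F', hF', rfl⟩ := ih2
    exact ⟨F ∪ F', ⟨hF.1.union hF'.1, union_subset hF.2 hF'.2⟩, sInter_union _ _⟩

theorem cps_borel_polish {P : Type*} [tP : TopologicalSpace P] [PolishSpace P] (S : Set P)
    (hS : @MeasurableSet P (borel P) S) :
    ∃ t : TopologicalSpace S, @PolishSpace S t ∧ t ≤ instTopologicalSpaceSubtype := by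
  let _ : MeasurableSpace P := borel P
  have : BorelSpace P := ⟨rfl⟩
  obtain ⟨t', hle, hpol, hcl, -⟩ := MeasurableSet.isClopenable (s := S) hS
  exact ⟨@instTopologicalSpaceSubtype P _ t', @IsClosed.polishSpace P t' hpol S hcl,
    induced_mono hle⟩

theorem cps_lusin_probabilityMeasure (β : Type) [TopologicalSpace β] [PolishSpace β]
    [MeasurableSpace β] [BorelSpace β] : LusinSpace (ProbabilityMeasure β) := by
  obtain ⟨e, he⟩ := cps_hilbert_embedding β
  have hem : MeasurableEmbedding e := he.continuous.measurableEmbedding he.injective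
  let K := ℕ → unitInterval
  have hpolK : PolishSpace (ProbabilityMeasure K) := by
    let _ := metrizableSpaceMetric (ProbabilityMeasure K)
    infer_instance
  let S : Set (ProbabilityMeasure K) := {μ | (μ : Measure K) (range e) = 1}
  have hS : @MeasurableSet _ (borel (ProbabilityMeasure K)) S := by
    have h1 := @cps_eval_measurable K (ProbabilityMeasure K) _ _ _ _ _ (borel _)
      (@OpensMeasurableSpace.mk _ _ (borel _) le_rfl) id continuous_id _ hem.measurableSet_range
    exact h1 (measurableSet_singleton 1)
  have hae : ∀ μ : S, ∀ᵐ a ∂(μ.1 : Measure K), a ∈ range e := fun μ =>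
    mem_ae_iff_prob_eq_one hem.measurableSet_range |>.2 μ.2
  let Φ : S → ProbabilityMeasure β := fun μ =>
    ⟨Measure.comap e (μ.1 : Measure K), hem.isProbabilityMeasure_comap (hae μ)⟩
  have hΦ : ∀ (μ : S) (U : Set K), (Φ μ : Measure β) (e ⁻¹' U) = (μ.1 : Measure K) U := by
    intro μ U
    change Measure.comap e (μ.1 : Measure K) (e ⁻¹' U) = _
    rw [hem.comap_apply, image_preimage_eq_inter_range]
    refine measure_congr ?_
    filter_upwards [hae μ] with a ha
    exact propext ⟨fun h => h.1, fun h => ⟨h, ha⟩⟩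
  have hcont : Continuous Φ := by
    rw [continuous_iff_continuousAt]
    intro μ
    refine tendsto_of_forall_isOpen_le_liminf' fun G hG => ?_
    obtain ⟨U, hU, rfl⟩ := he.isOpen_iff.1 hG
    have h2 : (fun i : S => (Φ i : Measure β) (e ⁻¹' U)) = fun i => (i.1 : Measure K) U :=
      funext fun i => hΦ i U
    change (Φ μ : Measure β) (e ⁻¹' U) ≤
      Filter.liminf (fun i : S => (Φ i : Measure β) (e ⁻¹' U)) (nhds μ)
    rw [h2, hΦ]
    exact ProbabilityMeasure.le_liminf_measure_open_of_tendsto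
      (continuous_subtype_val.tendsto μ) hU
  obtain ⟨t, ht, htle⟩ := cps_borel_polish S hS
  refine ⟨S, t, ht, Φ, continuous_le_dom htle hcont, ?_, ?_⟩
  · intro μ ν h
    apply Subtype.ext
    apply Subtype.ext
    ext U hU
    change (μ.1 : Measure K) U = (ν.1 : Measure K) U
    rw [← hΦ, ← hΦ, h]
  · intro ν
    have hp : (ν.map hem.measurable.aemeasurable) ∈ S := by
      change Measure.map e (ν : Measure β) (range e) = 1
      rw [hem.map_apply]
      simp
    refine ⟨⟨_, hp⟩, ?_⟩
    apply Subtype.ext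
    change Measure.comap e (Measure.map e (ν : Measure β)) = _
    exact hem.comap_map _

/-- the core construction -/
theorem cps_core {X : Type*} [TopologicalSpace X] [MetrizableSpace X]
    [MeasurableSpace X] [BorelSpace X]
    (𝓑 : Set (Set X)) (h𝓑c : 𝓑.Countable) (h𝓑m : ∀ B ∈ 𝓑, MeasurableSet B)
    (β : Type) [TopologicalSpace β] [PolishSpace β] (f : β → X) (hf : Continuous f)
    (hs : Function.Surjective f) :
    ∃ (γ : Type) (t : TopologicalSpace γ), @PolishSpace γ t ∧
      ∃ F : γ → {μ : 𝓑 → ProbabilityMeasure X // IsCPS 𝓑 μ}, @Continuous γ _ t _ F ∧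
        Function.Surjective F ∧ (Function.Injective f → Function.Injective F) := by
  let _ : MeasurableSpace β := borel β
  have : BorelSpace β := ⟨rfl⟩
  have : SeparableSpace X := by
    exact hs.denseRange.separableSpace hf
  have : SecondCountableTopology X := by
    let _ := metrizableSpaceMetric X
    exact UniformSpace.secondCountable_of_separable X
  have : Countable 𝓑 := h𝓑c
  obtain ⟨γ₀, t₀, hγ₀, h, hc, hb⟩ := cps_lusin_probabilityMeasure β
  obtain ⟨c, hcinj⟩ := exists_injective_nat 𝓑
  let ε : 𝓑 ≃ range c := Equiv.ofInjective c hcinj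
  let P := range c → γ₀
  have hmapc : Continuous (fun ν : ProbabilityMeasure β => ν.map hf.measurable.aemeasurable) :=
    ProbabilityMeasure.continuous_map hf
  let H : γ₀ → ProbabilityMeasure X := fun z => (h z).map hf.measurable.aemeasurable
  have hH : Continuous H := hmapc.comp hc
  have hHs : Function.Surjective H := by
    intro μ
    obtain ⟨ν, hν⟩ := cps_map_surjective f hf hs μ
    obtain ⟨z, rfl⟩ := hb.2 ν
    exact ⟨z, hν⟩
  have hHi : Function.Injective f → Function.Injective H := by
    intro hi z w hzw
    apply hb.1
    have hem : MeasurableEmbedding f := hf.measurableEmbedding hi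
    apply Subtype.ext
    have h1 : Measure.map f (h z : Measure β) = Measure.map f (h w : Measure β) :=
      congrArg Subtype.val hzw
    have h2 := congrArg (Measure.comap f) h1
    rw [hem.comap_map, hem.comap_map] at h2
    exact h2
  let G : P → 𝓑 → ProbabilityMeasure X := fun p B => H (p (ε B))
  have hG : Continuous G := continuous_pi fun B => hH.comp (continuous_apply _)
  let S : Set P := {p | IsCPS 𝓑 (G p)}
  have hS : @MeasurableSet P (borel P) S := by
    let _ : MeasurableSpace P := borel P
    have : BorelSpace P := ⟨rfl⟩
    have hev : ∀ (B : 𝓑) (A : Set X), MeasurableSet A →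
        Measurable (fun p : P => (G p B : Measure X) A) := fun B A hA =>
      cps_eval_measurable (fun p => G p B) (hH.comp (continuous_apply _)) hA
    let D : Set (Set X) := generatePiSystem (countableBasis X)
    have hDc : D.Countable := cps_pi_countable (countable_countableBasis X)
    have hDg : ‹MeasurableSpace X› = MeasurableSpace.generateFrom D := by
      rw [generateFrom_generatePiSystem_eq, ← (isBasis_countableBasis X).borel_eq_generateFrom]
      exact BorelSpace.measurable_eq
    have hDm : ∀ A ∈ D, MeasurableSet A := fun A hA => by
      rw [hDg]; exact MeasurableSpace.measurableSet_generateFrom hA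
    have hSeq : S = {p | (∀ B : 𝓑, (G p B : Measure X) (B : Set X) = 1) ∧
        ∀ (B C : 𝓑), (B : Set X) ⊆ C → ∀ A ∈ insert univ D,
          (G p B : Measure X) (A ∩ B) * (G p C : Measure X) B = (G p C : Measure X) (A ∩ B)} := by
      ext p
      refine and_congr_right fun h1 => ⟨fun h2 B C hBC A hA => ?_, fun h2 A B C hA hAB hBC => ?_⟩
      · have hAm : MeasurableSet A := by
          rcases hA with rfl | hA
          · exact MeasurableSet.univ
          · exact hDm A hA
        exact h2 _ B C (hAm.inter (h𝓑m B B.2)) inter_subset_right hBC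
      · have hBm := h𝓑m B B.2
        have hext : ((G p C : Measure X) B) • (G p B : Measure X).restrict B
            = (G p C : Measure X).restrict B := by
          have : IsFiniteMeasure (((G p C : Measure X) B) • (G p B : Measure X).restrict B) :=
            Measure.smul_finite _ (measure_ne_top _ _)
          refine ext_of_generate_finite D hDg (isPiSystem_generatePiSystem _) ?_ ?_
          · intro A hA
            have := h2 B C hBC A (Or.inr hA)
            rw [Measure.smul_apply, Measure.restrict_apply (hDm A hA),
              Measure.restrict_apply (hDm A hA), smul_eq_mul, mul_comm, this]
          · have := h2 B C hBC univ (Or.inl rfl)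
            rw [Measure.smul_apply, Measure.restrict_apply MeasurableSet.univ,
              Measure.restrict_apply MeasurableSet.univ, smul_eq_mul, mul_comm, this]
        have := congrArg (fun m => m A) hext
        simp only [Measure.smul_apply, Measure.restrict_apply hA, smul_eq_mul,
          inter_eq_left.2 hAB] at this
        rw [mul_comm, this]
    rw [hSeq, ofPred_and]
    have hDc' : (insert univ D).Countable := hDc.insert _
    refine MeasurableSet.inter ?_ ?_
    · rw [ofPred_forall]
      exact MeasurableSet.iInter fun B => hev B B (h𝓑m B B.2) (measurableSet_singleton 1)
    · have : {p : P | ∀ (B C : 𝓑), (B : Set X) ⊆ C → ∀ A ∈ insert univ D,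
          (G p B : Measure X) (A ∩ B) * (G p C : Measure X) B = (G p C : Measure X) (A ∩ B)}
          = ⋂ (B : 𝓑), ⋂ (C : 𝓑), ⋂ (_ : (B : Set X) ⊆ C), ⋂ A ∈ insert univ D,
            {p | (G p B : Measure X) (A ∩ B) * (G p C : Measure X) B
              = (G p C : Measure X) (A ∩ B)} := by
        ext p; simp only [mem_iInter, mem_ofPred_eq]
      rw [this]
      refine MeasurableSet.iInter fun B => MeasurableSet.iInter fun C => MeasurableSet.iInter
        fun _ => MeasurableSet.biInter hDc' fun A hA => ?_
      have hAm : MeasurableSet A := by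
        rcases hA with rfl | hA
        · exact MeasurableSet.univ
        · exact hDm A hA
      have hBm := h𝓑m B B.2
      exact measurableSet_eq_fun ((hev B _ (hAm.inter hBm)).mul (hev C _ hBm))
        (hev C _ (hAm.inter hBm))
  have hGS : Continuous (fun p : S => (⟨G p.1, p.2⟩ :
      {μ : 𝓑 → ProbabilityMeasure X // IsCPS 𝓑 μ})) :=
    (hG.comp continuous_subtype_val).subtype_mk _
  obtain ⟨t, ht, htle⟩ := cps_borel_polish S hS
  refine ⟨S, t, ht, fun p => ⟨G p.1, p.2⟩, ?_, ?_, ?_⟩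
  · exact continuous_le_dom htle hGS
  · rintro ⟨μ, hμ⟩
    choose z hz using fun B => hHs (μ B)
    have hGz : G (fun i => z (ε.symm i)) = μ := by
      funext B
      simp [G, hz]
    have hGI : IsCPS 𝓑 (G (fun i => z (ε.symm i))) := by rw [hGz]; exact hμ
    exact ⟨⟨fun i => z (ε.symm i), hGI⟩, Subtype.ext hGz⟩
  · intro hi p q hpq
    apply Subtype.ext
    have h1 : G p.1 = G q.1 := congrArg Subtype.val hpq
    funext i
    have h2 := congrFun h1 (ε.symm i)
    have h3 := hHi hi h2
    simpa using h3

/-- For a metrizable Souslin space `X` and countable family `𝓑` of conditioning events,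
`Δ^𝓑(X)` is Souslin; if moreover `X` is Lusin, `Δ^𝓑(X)` is Lusin (no clopenness needed). -/
theorem cps_souslin_lusin {X : Type*} [TopologicalSpace X] [MetrizableSpace X]
    [MeasurableSpace X] [BorelSpace X]
    (hX : SouslinSpace X)
    (𝓑 : Set (Set X)) (h𝓑ne : 𝓑.Nonempty) (h𝓑c : 𝓑.Countable)
    (h𝓑m : ∀ B ∈ 𝓑, MeasurableSet B) (hempty : ∅ ∉ 𝓑) :
    SouslinSpace {μ : 𝓑 → ProbabilityMeasure X // IsCPS 𝓑 μ} ∧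
      (LusinSpace X → LusinSpace {μ : 𝓑 → ProbabilityMeasure X // IsCPS 𝓑 μ}) := by
  refine ⟨?_, ?_⟩
  · obtain ⟨β, tβ, hβ, f, hf, hs⟩ := hX
    obtain ⟨γ, t, hγ, F, hF, hFs, -⟩ := cps_core 𝓑 h𝓑c h𝓑m β f hf hs
    exact ⟨γ, t, hγ, F, hF, hFs⟩
  · rintro ⟨β, tβ, hβ, f, hf, hb⟩
    obtain ⟨γ, t, hγ, F, hF, hFs, hFi⟩ := cps_core 𝓑 h𝓑c h𝓑m β f hf hb.2
    exact ⟨γ, t, hγ, F, hF, hFi hb.1, hFs⟩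
end

section
/- Let ((Y_n, Σ_n, B_n), f_{m,n}, μ_n) be a projective sequence of conditional probability systems where each Y_n is a Souslin space. Then there exists a unique CPS μ on the projective limit Y = lim← Y_n (with conditioning family B_Y = f̄₁^{-1}(B₁)) such that L̄_{f̄_n}(μ) = μ_n for every n, where f̄_n : Y → Y_n are the canonical limit projections. -/
open MeasureTheory Set TopologicalSpace

open Filter Topology
open scoped ENNReal

lemma SouslinSpace.hereditarilyLindelof {α : Type*} [TopologicalSpace α] (h : SouslinSpace α) :
    HereditarilyLindelofSpace α := by
  obtain ⟨β, t, hβ, g, hg, hs⟩ := h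
  refine HereditarilyLindelofSpace.of_forall_isOpen fun s _ => ?_
  rw [← image_preimage_eq s hs]
  exact (HereditarilyLindelofSpace.isLindelof _).image hg

lemma pi_hereditarilyLindelof {Y : ℕ → Type*} [∀ n, TopologicalSpace (Y n)]
    (h : ∀ n, SouslinSpace (Y n)) : HereditarilyLindelofSpace (∀ n, Y n) := by
  choose β t hβ g hg hs using h
  refine HereditarilyLindelofSpace.of_forall_isOpen fun s _ => ?_
  have hsur : Function.Surjective (fun (x : ∀ n, β n) n => g n (x n)) := by
    intro y
    choose x hx using fun n => hs n (y n)
    exact ⟨x, funext hx⟩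
  rw [← image_preimage_eq s hsur]
  refine (HereditarilyLindelofSpace.isLindelof _).image ?_
  exact continuous_pi fun n => (hg n).comp (continuous_apply n)

lemma measurable_of_isOpen_pi {Y : ℕ → Type*} [∀ n, TopologicalSpace (Y n)]
    [∀ n, MeasurableSpace (Y n)] [∀ n, BorelSpace (Y n)]
    (h : ∀ n, SouslinSpace (Y n)) (W : Set (∀ n, Y n)) (hW : IsOpen W) : MeasurableSet W := by
  have := pi_hereditarilyLindelof h
  have key : ∀ x : W, ∃ V : Set (∀ n, Y n), IsOpen V ∧ MeasurableSet V ∧ x.1 ∈ V ∧ V ⊆ W := by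
    intro x
    obtain ⟨I, u, hu, hsub⟩ := isOpen_pi_iff.1 hW x.1 x.2
    refine ⟨(I : Set ℕ).pi u, isOpen_set_pi I.finite_toSet fun i hi => (hu i hi).1,
      MeasurableSet.pi I.countable_toSet fun i hi => (hu i hi).1.measurableSet,
      fun i hi => (hu i hi).2, hsub⟩
  choose V hVo hVm hVx hVW using key
  obtain ⟨t, ht, hU⟩ := eq_open_union_countable V hVo
  have : W = ⋃ i ∈ t, V i := by
    rw [hU]
    refine Subset.antisymm (fun x hx => mem_iUnion.2 ⟨⟨x, hx⟩, hVx ⟨x, hx⟩⟩) (iUnion_subset hVW)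
  rw [this]
  exact MeasurableSet.biUnion ht fun i _ => hVm i

lemma compact_outer {α : Type*} [TopologicalSpace α] [T2Space α] [HereditarilyLindelofSpace α]
    [MeasurableSpace α] [BorelSpace α] (ν : Measure α) [IsFiniteMeasure ν] (K : Set α)
    (hK : IsCompact K) (c : ℝ≥0∞) (h : ∀ U, IsOpen U → K ⊆ U → c ≤ ν U) : c ≤ ν K := by
  let ι := {p : Set α × Set α // IsOpen p.1 ∧ IsOpen p.2 ∧ K ⊆ p.1 ∧ Disjoint p.1 p.2}
  have : Nonempty ι := ⟨⟨(univ, ∅), isOpen_univ, isOpen_empty, subset_univ _, by simp⟩⟩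
  obtain ⟨k, hk⟩ := eq_open_union_nat (fun p : ι => p.1.2) (fun p => p.2.2.1)
  have hKeq : K = ⋂ n, ⋂ i ≤ n, (k i).1.1 := by
    refine Subset.antisymm (subset_iInter fun n => subset_iInter₂ fun i _ => (k i).2.2.2.1) ?_
    intro x hx
    by_contra hxK
    obtain ⟨U, V, hU, hV, hKU, hxV, hd⟩ := SeparatedNhds.of_isCompact_isCompact hK
      (isCompact_singleton (x := x)) (by simpa using hxK)
    have : x ∈ ⋃ p : ι, p.1.2 := mem_iUnion.2 ⟨⟨(U, V), hU, hV, hKU, hd⟩, by simpa using hxV⟩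
    rw [← hk] at this
    obtain ⟨n, hn⟩ := mem_iUnion.1 this
    simp only [mem_iInter] at hx
    exact disjoint_left.1 (k n).2.2.2.2 (hx n n le_rfl) hn
  have hopen : ∀ n, IsOpen (⋂ i ≤ n, (k i).1.1) := fun n =>
    (finite_Iic n).isOpen_biInter fun i _ => (k i).2.1
  have hanti : Antitone fun n => ⋂ i ≤ n, (k i).1.1 := fun m n hmn =>
    biInter_subset_biInter_left fun i (hi : i ≤ m) => hi.trans hmn
  have ht := tendsto_measure_iInter_atTop (μ := ν)
    (fun n => (hopen n).measurableSet.nullMeasurableSet) hanti ⟨0, measure_ne_top _ _⟩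
  rw [← hKeq] at ht
  exact ge_of_tendsto' ht fun n => h _ (hopen n) (subset_iInter₂ fun i _ => (k i).2.2.2.1)

lemma baire_tube (k : ℕ → ℕ) (W : Set (ℕ → ℕ)) (hW : IsOpen W)
    (hK : {x : ℕ → ℕ | ∀ i, x i ≤ k i} ⊆ W) : ∃ n, {x : ℕ → ℕ | ∀ i < n, x i ≤ k i} ⊆ W := by
  have hc : IsCompact {x : ℕ → ℕ | ∀ i, x i ≤ k i} := by
    have : {x : ℕ → ℕ | ∀ i, x i ≤ k i} = univ.pi fun i => Iic (k i) := by
      ext x; simp [Pi.le_def]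
    rw [this]
    exact isCompact_univ_pi fun i => (finite_Iic _).isCompact
  let Wn : ℕ → Set (ℕ → ℕ) := fun n => {x | PiNat.cylinder x n ⊆ W}
  have hWn : ∀ n, IsOpen (Wn n) := by
    intro n
    rw [isOpen_iff_mem_nhds]
    intro x hx
    refine mem_of_superset ((PiNat.isOpen_cylinder _ x n).mem_nhds (PiNat.self_mem_cylinder x n)) ?_
    intro z hz
    have : PiNat.cylinder z n = PiNat.cylinder x n := PiNat.mem_cylinder_iff_eq.1 hz
    simpa [Wn, this] using hx
  have hmono : Monotone Wn := fun m n hmn x hx => (PiNat.cylinder_anti x hmn).trans hx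
  have hcov : {x : ℕ → ℕ | ∀ i, x i ≤ k i} ⊆ ⋃ n, Wn n := by
    intro x hx
    obtain ⟨s, ⟨z, n, rfl⟩, hxs, hs⟩ :=
      (PiNat.isTopologicalBasis_cylinders (fun _ : ℕ => ℕ)).exists_subset_of_mem_open (hK hx) hW
    refine mem_iUnion.2 ⟨n, ?_⟩
    have : PiNat.cylinder x n = PiNat.cylinder z n := PiNat.mem_cylinder_iff_eq.1 hxs
    simpa [Wn, this] using hs
  obtain ⟨n, hn⟩ := hc.elim_directed_cover Wn hWn hcov hmono.directed_le
  refine ⟨n, fun y hy => ?_⟩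
  have h1 : (fun i => min (y i) (k i)) ∈ Wn n := hn fun i => min_le_right _ _
  refine h1 ?_
  intro i hi
  simp [hy i hi]

lemma exists_compact_range {α : Type*} [TopologicalSpace α] [T2Space α]
    [HereditarilyLindelofSpace α]
    [MeasurableSpace α] [BorelSpace α] (ν : Measure α) [IsFiniteMeasure ν] (g : (ℕ → ℕ) → α)
    (hg : Continuous g) (c : ℝ≥0∞) (hc : c < ν (range g)) :
    ∃ K ⊆ range g, IsCompact K ∧ c ≤ ν K := by
  have step : ∀ (n : ℕ) (S : {S : Set (ℕ → ℕ) // c < ν (g '' S)}),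
      ∃ a, c < ν (g '' (S.1 ∩ {x | x n ≤ a})) := by
    rintro n ⟨S, hS⟩
    have h1 : g '' S = ⋃ a, g '' (S ∩ {x | x n ≤ a}) := by
      rw [← image_iUnion, ← inter_iUnion]
      congr 1
      refine (inter_eq_left.2 fun x _ => mem_iUnion.2 ⟨x n, le_refl (x n)⟩).symm
    have hm : Monotone fun a => g '' (S ∩ {x | x n ≤ a}) := fun a b hab =>
      image_mono (inter_subset_inter_right _ fun x (hx : x n ≤ a) => hx.trans hab)
    rw [h1, hm.measure_iUnion] at hS
    exact lt_iSup_iff.1 hS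
  choose a ha using step
  let S : ℕ → {S : Set (ℕ → ℕ) // c < ν (g '' S)} := fun n =>
    Nat.rec ⟨univ, by rwa [image_univ]⟩ (fun n S => ⟨_, ha n S⟩) n
  let k : ℕ → ℕ := fun n => a n (S n)
  have hS : ∀ n, (S n).1 = {x | ∀ i < n, x i ≤ k i} := by
    intro n
    induction n with
    | zero => simp [S]
    | succ n ih =>
      have : (S (n + 1)).1 = (S n).1 ∩ {x | x n ≤ k n} := rfl
      rw [this, ih]
      ext x
      simp only [mem_inter_iff, mem_ofPred_eq, Nat.lt_succ_iff_lt_or_eq]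
      grind
  refine ⟨g '' {x | ∀ i, x i ≤ k i}, image_subset_range _ _, ?_, ?_⟩
  · have : {x : ℕ → ℕ | ∀ i, x i ≤ k i} = univ.pi fun i => Iic (k i) := by
      ext x; simp [Pi.le_def]
    rw [this]
    exact (isCompact_univ_pi fun i => (finite_Iic _).isCompact).image hg
  · refine compact_outer ν _ ?_ c ?_
    · have : {x : ℕ → ℕ | ∀ i, x i ≤ k i} = univ.pi fun i => Iic (k i) := by
        ext x; simp [Pi.le_def]
      rw [this]
      exact (isCompact_univ_pi fun i => (finite_Iic _).isCompact).image hg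
    · intro U hU hKU
      obtain ⟨n, hn⟩ := baire_tube k (g ⁻¹' U) (hU.preimage hg) (image_subset_iff.1 hKU)
      rw [← hS n] at hn
      exact (S n).2.le.trans (measure_mono (image_subset_iff.2 hn))

lemma SouslinSpace.exists_compact {α : Type*} [TopologicalSpace α] [T2Space α]
    [MeasurableSpace α] [BorelSpace α] (h : SouslinSpace α) (ν : Measure α) [IsFiniteMeasure ν]
    (E : Set α) (hE : MeasurableSet E) (δ : ℝ≥0∞) (hδ : δ ≠ 0) :
    ∃ K ⊆ E, IsCompact K ∧ ν (E \ K) ≤ δ := by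
  have := h.hereditarilyLindelof
  have hA : AnalyticSet E := by
    obtain ⟨β, t, hβ, g, hg, hs⟩ := h
    rw [← image_preimage_eq E hs]
    borelize β
    exact (hE.preimage hg.measurable).analyticSet.image_of_continuous hg
  by_cases h0 : ν E = 0
  · exact ⟨∅, empty_subset _, isCompact_empty, by simp [h0]⟩
  rw [AnalyticSet] at hA
  rcases hA with rfl | ⟨g, hg, rfl⟩
  · simp at h0
  obtain ⟨K, hKs, hK, hc⟩ := exists_compact_range ν g hg (ν (range g) - δ)
    (ENNReal.sub_lt_self (measure_ne_top _ _) h0 hδ)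
  refine ⟨K, hKs, hK, ?_⟩
  rw [measure_sdiff hKs hK.measurableSet.nullMeasurableSet (measure_ne_top _ _)]
  exact tsub_le_iff_tsub_le.1 hc

section limit

variable {Y : ℕ → Type*}

lemma thread_surj (f : ∀ m n, m ≤ n → Y n → Y m)
    (hsurj : ∀ m n (h : m ≤ n), Function.Surjective (f m n h))
    (hid : ∀ n, f n n le_rfl = id)
    (hcomp : ∀ m n p (hmn : m ≤ n) (hnp : n ≤ p),
      f m p (le_trans hmn hnp) = f m n hmn ∘ f n p hnp) (k : ℕ) :
    Function.Surjective
      (fun y : {y : ∀ n, Y n // ∀ m n (h : m ≤ n), f m n h (y n) = y m} => y.val k) := by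
  intro z
  choose s hs using fun n => hsurj n (n + 1) n.le_succ
  let w : ∀ j, Y (k + j) := fun j => Nat.rec z (fun j x => s (k + j) x) j
  have hw1 : ∀ j, f (k + j) (k + (j + 1)) (Nat.le_succ _) (w (j + 1)) = w j :=
    fun j => hs (k + j) (w j)
  have hw : ∀ i j (h : i ≤ j), f (k + i) (k + j) (by omega) (w j) = w i := by
    intro i j h
    induction j, h using Nat.le_induction with
    | base => rw [hid]; rfl
    | succ j hj ih =>
      rw [hcomp (k + i) (k + j) (k + (j + 1)) (by omega) (by omega)]
      simp only [Function.comp_apply]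
      rw [hw1, ih]
  refine ⟨⟨fun n => f n (k + n) (by omega) (w n), ?_⟩, ?_⟩
  · intro m n h
    have e1 := congrFun (hcomp m n (k + n) h (by omega)) (w n)
    have e2 := congrFun (hcomp m (k + m) (k + n) (by omega) (by omega)) (w n)
    simp only [Function.comp_apply] at e1 e2
    rw [← e1, e2, hw m n h]
  · exact hw 0 k (by omega)

variable [∀ n, TopologicalSpace (Y n)] [∀ n, T2Space (Y n)]
    [∀ n, MeasurableSpace (Y n)] [∀ n, BorelSpace (Y n)]

lemma exists_thread (hY : ∀ n, SouslinSpace (Y n))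
    (f : ∀ m n, m ≤ n → Y n → Y m)
    (hcont : ∀ m n (h : m ≤ n), Continuous (f m n h))
    (hid : ∀ n, f n n le_rfl = id)
    (hcomp : ∀ m n p (hmn : m ≤ n) (hnp : n ≤ p),
      f m p (le_trans hmn hnp) = f m n hmn ∘ f n p hnp)
    (ν : ∀ n, Measure (Y n)) [∀ n, IsFiniteMeasure (ν n)]
    (hν : ∀ m n (h : m ≤ n) (E : Set (Y m)), MeasurableSet E → ν m E = ν n (f m n h ⁻¹' E))
    (F : ∀ n, Set (Y n)) (hF : ∀ n, MeasurableSet (F n))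
    (hFf : ∀ m n (h : m ≤ n), F n ⊆ f m n h ⁻¹' (F m))
    (ε : ℝ≥0∞) (hε : ε ≠ 0) (hFε : ∀ n, ε ≤ ν n (F n)) :
    ∃ y : {y : ∀ n, Y n // ∀ m n (h : m ≤ n), f m n h (y n) = y m}, ∀ n, y.1 n ∈ F n := by
  obtain ⟨δ, hδ0, hδ⟩ := ENNReal.exists_pos_sum_of_countable' hε ℕ
  choose K hKF hK hKν using fun n => (hY n).exists_compact (ν n) (F n) (hF n) (δ n) (hδ0 n).ne'
  have hG : ∀ n, ∃ z : Y n, ∀ j (h : j ≤ n), f j n h z ∈ K j := by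
    intro n
    by_contra! hcon
    have hsub : F n ⊆ ⋃ j : Fin (n + 1), f j n (Nat.lt_succ_iff.1 j.2) ⁻¹' (F j \ K j) := by
      intro z hz
      obtain ⟨j, h, hj⟩ := hcon z
      exact mem_iUnion.2 ⟨⟨j, Nat.lt_succ_iff.2 h⟩, hFf j n h hz, hj⟩
    have : ν n (F n) < ε := calc
      ν n (F n) ≤ ∑ j : Fin (n + 1), ν n (f j n (Nat.lt_succ_iff.1 j.2) ⁻¹' (F j \ K j)) :=
        (measure_mono hsub).trans (measure_iUnion_fintype_le _ _)
      _ = ∑ j : Fin (n + 1), ν j (F j \ K j) := by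
        refine Finset.sum_congr rfl fun j _ => ?_
        rw [hν j n (Nat.lt_succ_iff.1 j.2) _ ((hF j).diff (hK j).measurableSet)]
      _ ≤ ∑ j : Fin (n + 1), δ j := Finset.sum_le_sum fun j _ => hKν j
      _ = ∑ j ∈ Finset.range (n + 1), δ j := Fin.sum_univ_eq_sum_range δ (n + 1)
      _ ≤ ∑' j, δ j := ENNReal.sum_le_tsum _
      _ < ε := hδ
    exact absurd (hFε n) (not_le.2 this)
  choose z hz using hG
  let S : ℕ → Set (∀ n, Y n) := fun k =>
    univ.pi K ∩ {y | ∀ i j (h : i ≤ j), j ≤ k → f i j h (y j) = y i}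
  have hScl : ∀ k, IsClosed {y : ∀ n, Y n | ∀ i j (h : i ≤ j), j ≤ k → f i j h (y j) = y i} := by
    intro k
    simp only [ofPred_forall]
    refine isClosed_iInter fun i => isClosed_iInter fun j => isClosed_iInter fun h =>
      isClosed_iInter fun _ => isClosed_eq ((hcont i j h).comp (continuous_apply j))
        (continuous_apply i)
  have hScp : ∀ k, IsCompact (S k) := fun k => (isCompact_univ_pi hK).inter_right (hScl k)
  have hne : (⋂ k, S k).Nonempty := by
    refine IsCompact.nonempty_iInter_of_sequence_nonempty_isCompact_isClosed S ?_ ?_ (hScp 0)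
      fun k => (hScp k).isClosed
    · intro k
      exact inter_subset_inter_right _ fun y hy i j h hj => hy i j h (by omega)
    · intro k
      refine ⟨fun j => if h : j ≤ k then f j k h (z k) else z j, ?_, ?_⟩
      · intro j _
        dsimp only
        split_ifs with h
        · exact hz k j h
        · have := hz j j le_rfl
          rwa [hid] at this
      · intro i j h hj
        have hi : i ≤ k := h.trans hj
        simp only [hj, hi, dite_true]
        exact (congrFun (hcomp i j k h hj) (z k)).symm
  obtain ⟨y, hy⟩ := hne
  rw [mem_iInter] at hy
  exact ⟨⟨y, fun m n h => (hy n).2 m n h le_rfl⟩, fun n => hKF n ((hy 0).1 n (mem_univ n))⟩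

end limit

section content

variable {Y : ℕ → Type*}

/-- The space of threads. -/
abbrev ThreadSpace (f : ∀ m n, m ≤ n → Y n → Y m) :=
  {y : ∀ n, Y n // ∀ m n (h : m ≤ n), f m n h (y n) = y m}

/-- Cylinders in the thread space. -/
def threadCyl [∀ n, MeasurableSpace (Y n)] (f : ∀ m n, m ≤ n → Y n → Y m) :
    Set (Set (ThreadSpace f)) :=
  {A | ∃ (n : ℕ) (E : Set (Y n)), MeasurableSet E ∧ A = (fun y => y.val n) ⁻¹' E}

variable [∀ n, MeasurableSpace (Y n)] {f : ∀ m n, m ≤ n → Y n → Y m}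

lemma thread_preimage (m n : ℕ) (h : m ≤ n) (E : Set (Y m)) :
    (fun y : ThreadSpace f => y.val m) ⁻¹' E = (fun y => y.val n) ⁻¹' (f m n h ⁻¹' E) := by
  ext y
  simp [y.2 m n h]

lemma threadCyl_common (hf : ∀ m n h, Measurable (f m n h)) {A B : Set (ThreadSpace f)}
    (hA : A ∈ threadCyl f) (hB : B ∈ threadCyl f) :
    ∃ (n : ℕ) (E F : Set (Y n)), MeasurableSet E ∧ MeasurableSet F ∧
      A = (fun y => y.val n) ⁻¹' E ∧ B = (fun y => y.val n) ⁻¹' F := by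
  obtain ⟨m, E, hE, rfl⟩ := hA
  obtain ⟨n, F, hF, rfl⟩ := hB
  exact ⟨max m n, _, _, hf m _ (le_max_left m n) hE, hf n _ (le_max_right m n) hF,
    thread_preimage _ _ _ _, thread_preimage _ _ _ _⟩

lemma threadCyl_ring (hf : ∀ m n h, Measurable (f m n h)) : IsSetRing (threadCyl f) where
  empty_mem := ⟨0, ∅, MeasurableSet.empty, by simp⟩
  union_mem := by
    intro A B hA hB
    obtain ⟨n, E, F, hE, hF, rfl, rfl⟩ := threadCyl_common hf hA hB
    exact ⟨n, E ∪ F, hE.union hF, rfl⟩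
  sdiff_mem := by
    intro A B hA hB
    obtain ⟨n, E, F, hE, hF, rfl, rfl⟩ := threadCyl_common hf hA hB
    exact ⟨n, E \ F, hE.diff hF, rfl⟩

open Classical in
/-- The set function on cylinders. -/
noncomputable def threadFun (f : ∀ m n, m ≤ n → Y n → Y m) (ν : ∀ n, Measure (Y n))
    (A : Set (ThreadSpace f)) : ℝ≥0∞ :=
  if h : A ∈ threadCyl f then ν h.choose h.choose_spec.choose else 0

lemma threadFun_eq (hs : ∀ k, Function.Surjective (fun y : ThreadSpace f => y.val k))
    (ν : ∀ n, Measure (Y n))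
    (hν : ∀ m n (h : m ≤ n) (E : Set (Y m)), MeasurableSet E → ν m E = ν n (f m n h ⁻¹' E))
    (n : ℕ) (E : Set (Y n)) (hE : MeasurableSet E) :
    threadFun f ν ((fun y => y.val n) ⁻¹' E) = ν n E := by
  have h : ((fun y : ThreadSpace f => y.val n) ⁻¹' E) ∈ threadCyl f := ⟨n, E, hE, rfl⟩
  rw [threadFun, dif_pos h]
  obtain ⟨hm, heq⟩ := h.choose_spec.choose_spec
  generalize h.choose_spec.choose = F at *
  generalize h.choose = m at *
  rw [hν m _ (le_max_left m n) F hm, hν n _ (le_max_right m n) E hE]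
  congr 1
  rw [thread_preimage n _ (le_max_right m n), thread_preimage m _ (le_max_left m n)] at heq
  exact ((hs _).preimage_injective heq).symm

variable [∀ n, TopologicalSpace (Y n)] [∀ n, T2Space (Y n)] [∀ n, BorelSpace (Y n)]

lemma exists_limit_measure [MeasurableSpace (ThreadSpace f)]
    (hgen : ‹MeasurableSpace (ThreadSpace f)› = MeasurableSpace.generateFrom (threadCyl f))
    (hY : ∀ n, SouslinSpace (Y n))
    (hcont : ∀ m n (h : m ≤ n), Continuous (f m n h))
    (hs : ∀ k, Function.Surjective (fun y : ThreadSpace f => y.val k))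
    (hid : ∀ n, f n n le_rfl = id)
    (hcomp : ∀ m n p (hmn : m ≤ n) (hnp : n ≤ p),
      f m p (le_trans hmn hnp) = f m n hmn ∘ f n p hnp)
    (ν : ∀ n, Measure (Y n)) [∀ n, IsProbabilityMeasure (ν n)]
    (hν : ∀ m n (h : m ≤ n) (E : Set (Y m)), MeasurableSet E → ν m E = ν n (f m n h ⁻¹' E)) :
    ∃ P : ProbabilityMeasure (ThreadSpace f), ∀ n (E : Set (Y n)), MeasurableSet E →
      (P : Measure (ThreadSpace f)) ((fun y => y.val n) ⁻¹' E) = ν n E := by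
  have hf : ∀ m n h, Measurable (f m n h) := fun m n h => (hcont m n h).measurable
  have hR := threadCyl_ring hf
  have hFe := threadFun_eq hs ν hν
  let m : AddContent ℝ≥0∞ (threadCyl f) := hR.addContent_of_union (threadFun f ν)
    (by simpa using hFe 0 ∅ MeasurableSet.empty)
    (by
      intro A B hA hB hd
      obtain ⟨n, E, F, hE, hF, rfl, rfl⟩ := threadCyl_common hf hA hB
      have hd' : Disjoint E F := by
        rw [disjoint_iff_inter_eq_empty] at hd ⊢
        rw [← preimage_inter] at hd
        exact (hs n).preimage_injective (by simpa using hd)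
      rw [← preimage_union, hFe n _ (hE.union hF), hFe n _ hE, hFe n _ hF,
        measure_union hd' hF])
  have hm : ∀ n (E : Set (Y n)), MeasurableSet E → m ((fun y => y.val n) ⁻¹' E) = ν n E := hFe
  have hsub : m.IsSigmaSubadditive := by
    refine isSigmaSubadditive_of_addContent_iUnion_eq_tsum hR fun g hg hU hd =>
      addContent_iUnion_eq_sum_of_tendsto_zero hR m ?_ ?_ hg hU hd
    · rintro _ ⟨n, E, hE, rfl⟩
      rw [hm n E hE]
      exact measure_ne_top _ _
    · intro s hsC hanti hemp
      have hmanti : Antitone fun n => m (s n) := fun i j hij =>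
        addContent_mono hR.isSetSemiring (hsC j) (hsC i) (hanti hij)
      have ht := tendsto_atTop_iInf hmanti
      by_cases h0 : (⨅ n, m (s n)) = 0
      · rwa [h0] at ht
      exfalso
      choose N E hE hsE using hsC
      let F : ∀ n, Set (Y n) := fun n => ⋂ k : ℕ, ⋂ _ : k ≤ n, ⋂ h : N k ≤ n, f (N k) n h ⁻¹' E k
      have hF : ∀ n, MeasurableSet (F n) := fun n =>
        MeasurableSet.iInter fun k => MeasurableSet.iInter fun _ => MeasurableSet.iInter fun h =>
          hf _ _ h (hE k)
      obtain ⟨y, hy⟩ := exists_thread hY f hcont hid hcomp ν hν F hF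
        (by
          intro i j hij z hz
          simp only [F, mem_preimage, mem_iInter] at hz ⊢
          intro k hk hN
          have := hz k (hk.trans hij) (hN.trans hij)
          rw [hcomp (N k) i j hN hij] at this
          exact this) _ h0
        (by
          intro n
          refine (iInf_le _ n).trans ?_
          rw [← hm n _ (hF n)]
          refine addContent_mono hR.isSetSemiring ⟨N n, E n, hE n, hsE n⟩ ⟨n, F n, hF n, rfl⟩ ?_
          intro y hy
          simp only [F, mem_preimage, mem_iInter]
          intro k hk hN
          have := hanti hk hy
          rw [hsE k] at this
          rw [y.2 _ _ hN]
          exact this)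
      have : y ∈ ⋂ n, s n := by
        refine mem_iInter.2 fun k => ?_
        have := hy (max k (N k))
        simp only [F, mem_preimage, mem_iInter] at this
        have := this k (le_max_left _ _) (le_max_right _ _)
        rw [y.2] at this
        rw [hsE k]
        exact this
      rw [hemp] at this
      exact this
  have key : ∀ n (E : Set (Y n)), MeasurableSet E →
      (m.measure hR.isSetSemiring hgen.le hsub) ((fun y => y.val n) ⁻¹' E) = ν n E := by
    intro n E hE
    rw [m.measure_eq hR.isSetSemiring hgen hsub ⟨n, E, hE, rfl⟩, hm n E hE]
  refine ⟨⟨m.measure hR.isSetSemiring hgen.le hsub, ⟨?_⟩⟩, key⟩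
  simpa using key 0 univ MeasurableSet.univ

lemma thread_borel (hY : ∀ n, SouslinSpace (Y n)) :
    borel (ThreadSpace f) = MeasurableSpace.generateFrom (threadCyl f) := by
  have hmeas : ∀ n, Measurable[MeasurableSpace.generateFrom (threadCyl f)]
      (fun y : ThreadSpace f => y.val n) := fun n E hE =>
    MeasurableSpace.measurableSet_generateFrom ⟨n, E, hE, rfl⟩
  apply le_antisymm
  · refine MeasurableSpace.generateFrom_le ?_
    rintro _ ⟨W, hW, rfl⟩
    exact @measurable_pi_lambda _ _ _ (MeasurableSpace.generateFrom (threadCyl f)) _ _ hmeas W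
      (measurable_of_isOpen_pi hY W hW)
  · refine MeasurableSpace.generateFrom_le ?_
    rintro _ ⟨n, E, hE, rfl⟩
    borelize (ThreadSpace f)
    have : Continuous (fun y : ThreadSpace f => y.val n) :=
      (continuous_apply n).comp continuous_subtype_val
    exact this.measurable hE

end content

/-- Kolmogorov extension theorem for CPSs: a projective sequence of conditional probability
systems on Hausdorff Souslin spaces (with continuous surjective bonding maps, compatible
conditioning families, and coherent conditional laws) admits a unique limit CPS on the
projective limit, whose image conditional law under each canonical projection is the given
CPS at that level. -/
theorem cps_projective_limit (Y : ℕ → Type*)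
    [∀ n, TopologicalSpace (Y n)] [∀ n, T2Space (Y n)] [∀ n, Nonempty (Y n)]
    [∀ n, MeasurableSpace (Y n)] [∀ n, BorelSpace (Y n)]
    (hY : ∀ n, SouslinSpace (Y n))
    (f : ∀ m n, m ≤ n → Y n → Y m)
    (hcont : ∀ m n (h : m ≤ n), Continuous (f m n h))
    (hsurj : ∀ m n (h : m ≤ n), Function.Surjective (f m n h))
    (hid : ∀ n, f n n le_rfl = id)
    (hcomp : ∀ m n p (hmn : m ≤ n) (hnp : n ≤ p),
      f m p (le_trans hmn hnp) = f m n hmn ∘ f n p hnp)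
    (𝓑 : ∀ n, Set (Set (Y n)))
    (h𝓑ne : ∀ n, (𝓑 n).Nonempty) (h𝓑m : ∀ n, ∀ B ∈ 𝓑 n, MeasurableSet B)
    (hemp : ∀ n, ∅ ∉ 𝓑 n)
    (h𝓑pre : ∀ m n (h : m ≤ n), (fun B => f m n h ⁻¹' B) '' (𝓑 m) = 𝓑 n)
    (μ : ∀ n, (𝓑 n) → ProbabilityMeasure (Y n))
    (hCPS : ∀ n, IsCPS (𝓑 n) (μ n))
    (hcoh : ∀ m n (h : m ≤ n) (B : 𝓑 m) (B' : 𝓑 n),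
      (B' : Set (Y n)) = f m n h ⁻¹' (B : Set (Y m)) →
      ∀ E : Set (Y m), MeasurableSet E →
        (μ m B : Measure (Y m)) E = (μ n B' : Measure (Y n)) (f m n h ⁻¹' E)) :
    ∃! μL : {C : Set {y : ∀ n, Y n // ∀ m n (h : m ≤ n), f m n h (y n) = y m} |
          ∃ B ∈ 𝓑 0, C = (fun y => y.val 0) ⁻¹' B} →
        @ProbabilityMeasure {y : ∀ n, Y n // ∀ m n (h : m ≤ n), f m n h (y n) = y m}
          (borel {y : ∀ n, Y n // ∀ m n (h : m ≤ n), f m n h (y n) = y m}),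
      @IsCPS _ (borel {y : ∀ n, Y n // ∀ m n (h : m ≤ n), f m n h (y n) = y m})
        {C | ∃ B ∈ 𝓑 0, C = (fun y => y.val 0) ⁻¹' B} μL ∧
      ∀ (k : ℕ) (B : 𝓑 k)
        (C : {C : Set {y : ∀ n, Y n // ∀ m n (h : m ≤ n), f m n h (y n) = y m} |
          ∃ B ∈ 𝓑 0, C = (fun y => y.val 0) ⁻¹' B}),
        (C : Set {y : ∀ n, Y n // ∀ m n (h : m ≤ n), f m n h (y n) = y m}) =
            (fun y => y.val k) ⁻¹' (B : Set (Y k)) →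
        ∀ E : Set (Y k), MeasurableSet E →
          (μ k B : Measure (Y k)) E = (μL C).val ((fun y => y.val k) ⁻¹' E) := by
  classical
  have hs := thread_surj f hsurj hid hcomp
  have hgen := thread_borel (f := f) hY
  have hf : ∀ m n h, Measurable (f m n h) := fun m n h => (hcont m n h).measurable
  have hR := threadCyl_ring hf
  letI : MeasurableSpace (ThreadSpace f) := borel (ThreadSpace f)
  have hpi : IsPiSystem (threadCyl f) := fun A hA B hB _ => hR.inter_mem hA hB
  have hcyl : ∀ n (E : Set (Y n)), MeasurableSet E →
      MeasurableSet ((fun y : ThreadSpace f => y.val n) ⁻¹' E) := by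
    intro n E hE
    change MeasurableSet[borel (ThreadSpace f)] _
    rw [hgen]
    exact MeasurableSpace.measurableSet_generateFrom ⟨n, E, hE, rfl⟩
  -- levels of a base set
  have hlev : ∀ B : 𝓑 0, ∀ n, f 0 n n.zero_le ⁻¹' (B : Set (Y 0)) ∈ 𝓑 n := by
    intro B n
    rw [← h𝓑pre 0 n n.zero_le]
    exact ⟨B, B.2, rfl⟩
  have hex : ∀ B : 𝓑 0, ∃ P : ProbabilityMeasure (ThreadSpace f),
      ∀ n (E : Set (Y n)), MeasurableSet E →
      (P : Measure (ThreadSpace f)) ((fun y => y.val n) ⁻¹' E) =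
        (μ n ⟨_, hlev B n⟩ : Measure (Y n)) E := by
    intro B
    refine exists_limit_measure hgen hY hcont hs hid hcomp
      (fun n => (μ n ⟨_, hlev B n⟩ : Measure (Y n))) ?_
    intro m n h E hE
    refine hcoh m n h _ _ ?_ E hE
    change f 0 n _ ⁻¹' (B : Set (Y 0)) = f m n h ⁻¹' (f 0 m _ ⁻¹' (B : Set (Y 0)))
    rw [hcomp 0 m n m.zero_le h]
    rfl
  choose P hP using hex
  have hbase : ∀ C : {C : Set (ThreadSpace f) | ∃ B ∈ 𝓑 0, C = (fun y => y.val 0) ⁻¹' B},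
      ∃ B : 𝓑 0, (C : Set (ThreadSpace f)) = (fun y => y.val 0) ⁻¹' (B : Set (Y 0)) := by
    rintro ⟨C, B, hB, rfl⟩
    exact ⟨⟨B, hB⟩, rfl⟩
  choose b hb using hbase
  have hlim : ∀ (k : ℕ) (B : 𝓑 k)
      (C : {C : Set (ThreadSpace f) | ∃ B ∈ 𝓑 0, C = (fun y => y.val 0) ⁻¹' B}),
      (C : Set (ThreadSpace f)) = (fun y => y.val k) ⁻¹' (B : Set (Y k)) →
      B = ⟨_, hlev (b C) k⟩ := by
    intro k B C h
    rw [hb C, thread_preimage 0 k k.zero_le] at h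
    exact Subtype.ext ((hs k).preimage_injective h).symm
  refine ⟨fun C => P (b C), ⟨⟨?_, ?_⟩, ?_⟩, ?_⟩
  · intro C
    change (P (b C) : Measure (ThreadSpace f)) (C : Set (ThreadSpace f)) = 1
    rw [hb C, thread_preimage 0 0 le_rfl, hP (b C) 0 _ (h𝓑m 0 _ (hlev (b C) 0))]
    exact (hCPS 0).1 ⟨_, hlev (b C) 0⟩
  · intro A B C hA hAB hBC
    change (P (b B) : Measure (ThreadSpace f)) A * (P (b C) : Measure (ThreadSpace f)) B
      = (P (b C) : Measure (ThreadSpace f)) A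
    have hBm : MeasurableSet (B : Set (ThreadSpace f)) := by
      rw [hb B]; exact hcyl 0 _ (h𝓑m 0 _ (b B).2)
    have hcylEq : ∀ k (E : Set (Y k)), MeasurableSet E →
        (P (b B) : Measure (ThreadSpace f)) ((fun y => y.val k) ⁻¹' E ∩ B) *
          (P (b C) : Measure (ThreadSpace f)) B
        = (P (b C) : Measure (ThreadSpace f)) ((fun y => y.val k) ⁻¹' E ∩ B) := by
      intro k E hE
      have hBk : (B : Set (ThreadSpace f)) =
          (fun y => y.val k) ⁻¹' (f 0 k k.zero_le ⁻¹' (b B : Set (Y 0))) := by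
        rw [hb B, thread_preimage 0 k k.zero_le]
      have hCk : (C : Set (ThreadSpace f)) =
          (fun y => y.val k) ⁻¹' (f 0 k k.zero_le ⁻¹' (b C : Set (Y 0))) := by
        rw [hb C, thread_preimage 0 k k.zero_le]
      have hBkm := h𝓑m k _ (hlev (b B) k)
      have hsub : f 0 k k.zero_le ⁻¹' (b B : Set (Y 0)) ⊆ f 0 k k.zero_le ⁻¹' (b C : Set (Y 0)) := by
        rw [hBk, hCk] at hBC
        exact (hs k).preimage_subset_preimage_iff.1 hBC
      rw [hBk, ← preimage_inter, hP _ k _ (hE.inter hBkm), hP _ k _ (hE.inter hBkm), hP _ k _ hBkm]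
      exact (hCPS k).2 _ ⟨_, hlev (b B) k⟩ ⟨_, hlev (b C) k⟩ (hE.inter hBkm) inter_subset_right hsub
    have hmeq : ((P (b C) : Measure (ThreadSpace f)) B) •
        (P (b B) : Measure (ThreadSpace f)).restrict B
        = (P (b C) : Measure (ThreadSpace f)).restrict B := by
      have hfin : IsFiniteMeasure (((P (b C) : Measure (ThreadSpace f)) B) •
        (P (b B) : Measure (ThreadSpace f)).restrict B) :=
        Measure.smul_finite _ (measure_ne_top _ _)
      have hall : ∀ S ∈ threadCyl f, (((P (b C) : Measure (ThreadSpace f)) B) •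
        (P (b B) : Measure (ThreadSpace f)).restrict B) S
        = (P (b C) : Measure (ThreadSpace f)).restrict B S := by
        rintro _ ⟨k, E, hE, rfl⟩
        rw [Measure.smul_apply, Measure.restrict_apply (hcyl k E hE),
          Measure.restrict_apply (hcyl k E hE), smul_eq_mul, mul_comm]
        exact hcylEq k E hE
      exact ext_of_generate_finite (threadCyl f) hgen hpi hall
        (hall univ ⟨0, univ, MeasurableSet.univ, rfl⟩)
    have := congrArg (fun ρ : Measure (ThreadSpace f) => ρ A) hmeq
    simp only [Measure.smul_apply, smul_eq_mul] at this
    rw [Measure.restrict_apply hA, Measure.restrict_apply hA, inter_eq_left.2 hAB] at this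
    rw [mul_comm]
    exact this
  · intro k B C h E hE
    rw [hlim k B C h]
    exact (hP (b C) k E hE).symm
  · rintro ρ ⟨-, hρ⟩
    funext C
    refine Subtype.ext ?_
    have hall : ∀ S ∈ threadCyl f, (ρ C).val S = (P (b C)).val S := by
      rintro _ ⟨k, E, hE, rfl⟩
      rw [← hρ k ⟨_, hlev (b C) k⟩ C (by rw [hb C, thread_preimage 0 k k.zero_le]) E hE]
      exact (hP (b C) k E hE).symm
    haveI : IsFiniteMeasure (ρ C).val := by
      haveI := (ρ C).2
      infer_instance
    exact ext_of_generate_finite (threadCyl f) hgen hpi hall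
      (hall univ ⟨0, univ, MeasurableSet.univ, rfl⟩)
end
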